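/- For every real numbers x1, x2, x3, x4 ≥ 0 with x1 + x2 + x3 + x4 = 1, we have 12·(x1·x2 + x3·x4)·(x1 + x2)·(x3 + x4) ≤ 3/8, with equality when x1 = x2 = x3 = x4 = 1/4. -/

import Mathlib

-- With `p = a + b` and `q = c + d`, substitute `4ab = p² - (a - b)²` and `4cd = q² - (c - d)²`;
-- what remains is `(p + q)⁴ - 8pq(p² + q²) = (p - q)⁴`.
theorem add_pow_four_sub_mul_eq_sum_of_squares {R : Type*} [CommRing R] (a b c d : R) :
    (a + b + c + d) ^ 4 - 32 * ((a * b + c * d) * (a + b) * (c + d)) =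
      (a + b - (c + d)) ^ 4 + 8 * ((a + b) * (c + d)) * ((a - b) ^ 2 + (c - d) ^ 2) := by
  ring

theorem mul_add_mul_mul_add_mul_add_le_add_pow_four {R : Type*} [CommRing R] [LinearOrder R]
    [IsOrderedRing R] {a b c d : R} (h : 0 ≤ (a + b) * (c + d)) :
    32 * ((a * b + c * d) * (a + b) * (c + d)) ≤ (a + b + c + d) ^ 4 := by
  rw [← sub_nonneg, add_pow_four_sub_mul_eq_sum_of_squares]
  exact add_nonneg (Even.pow_nonneg (by decide) _)
    (mul_nonneg (mul_nonneg (Nat.ofNat_nonneg 8) h) (add_nonneg (sq_nonneg _) (sq_nonneg _)))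

theorem stmt_0_general {K : Type*} [Field K] [LinearOrder K] [IsStrictOrderedRing K] :
    (∀ x1 x2 x3 x4 : K, 0 ≤ (x1 + x2) * (x3 + x4) → x1 + x2 + x3 + x4 = 1 →
      12 * (x1 * x2 + x3 * x4) * (x1 + x2) * (x3 + x4) ≤ 3 / 8) ∧
    12 * ((1 / 4 : K) * (1 / 4) + (1 / 4) * (1 / 4)) * ((1 / 4 : K) + 1 / 4) *
      ((1 / 4 : K) + 1 / 4) = 3 / 8 := by
  refine ⟨fun x1 x2 x3 x4 hprod hsum => ?_, by norm_num⟩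
  have hquartic := mul_add_mul_mul_add_mul_add_le_add_pow_four hprod
  rw [hsum, one_pow] at hquartic
  linarith

theorem stmt_0 :
    (∀ x1 x2 x3 x4 : ℝ, 0 ≤ x1 → 0 ≤ x2 → 0 ≤ x3 → 0 ≤ x4 →
      x1 + x2 + x3 + x4 = 1 →
      12 * (x1 * x2 + x3 * x4) * (x1 + x2) * (x3 + x4) ≤ 3 / 8) ∧
    12 * ((1/4 : ℝ) * (1/4) + (1/4) * (1/4)) * ((1/4 : ℝ) + 1/4) * ((1/4 : ℝ) + 1/4) = 3 / 8 :=
  ⟨fun x1 x2 x3 x4 _ _ _ _ => stmt_0_general.1 x1 x2 x3 x4 (by positivity), stmt_0_general.2⟩
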